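/- For every g ≥ 2, not every finite group is involved in the integral symplectic group Sp(2g,ℤ): there exists a finite group H such that no finite-index subgroup of Sp(2g,ℤ) admits a surjective homomorphism onto H. -/

import Mathlib

/-- A bundled finite group. -/
structure BundledFiniteGroup : Type 1 where
  carrier : Type
  [group : Group carrier]
  [finite : Finite carrier]

attribute [instance] BundledFiniteGroup.group BundledFiniteGroup.finite

/-!
Let `f : K → H` be a surjection from a finite-index subgroup of `Sp(2g, ℤ)` onto a nonabelian finite
simple group. The kernel of `f` contains a finite-index normal subgroup `N` of `Sp(2g, ℤ)`, and `N`
contains all transvections `x ↦ x + m c ω(x, u) u` for a suitable level `m`. Using these, every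
element of the principal congruence subgroup `Γ(m)` can be changed modulo `N` so as to act on any
prescribed hyperbolic plane only, fixing the other `g - 1 ≥ 1` planes. Elements acting on different
planes commute, so `[Γ(m), Γ(m)] ≤ N`, and simplicity forces `Γ(m) ∩ K ≤ ker f`. As
`[Γ(a), Γ(b)] ≤ Γ(ab)`, simplicity also lets `m` be replaced by one of its prime factors `p`, so `H`
is a quotient of a subgroup of `GL(2g, 𝔽_p)`. For a prime `q > 2g` other than `p`, all `q`-subgroups
of such a quotient are abelian. A simple group containing nonabelian `q`-groups for two primes
`q > 2g` is therefore not involved in `Sp(2g, ℤ)`; alternating groups provide examples.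
-/

namespace SymplecticInvolvement

open Matrix Module Sum
open scoped Matrix.Module commutatorElement

theorem exists_isCoprime_add_mul {x a y : ℤ} (hxa : IsCoprime x a) (ha : a ≠ 0) (hy : y ≠ 0) :
    ∃ k, IsCoprime (x + a * k) y := by
  have : NeZero (a.natAbs * y.natAbs) := ⟨by simp [ha, hy]⟩
  obtain ⟨v, hv⟩ := ZMod.unitsMap_surjective (Dvd.intro y.natAbs rfl : a.natAbs ∣ _)
    ((ZMod.coe_int_isUnit_iff_isCoprime x a.natAbs).mpr
      (by simpa [IsCoprime.abs_left_iff] using hxa.symm)).unit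
  obtain ⟨z, hz⟩ := ZMod.intCast_surjective (v : ZMod (a.natAbs * y.natAbs))
  have hzx : (z : ZMod a.natAbs) = x := by
    simpa [ZMod.unitsMap_def, ← hz] using congrArg Units.val hv
  have hzy : IsCoprime ((a.natAbs * y.natAbs : ℕ) : ℤ) z :=
    (ZMod.coe_int_isUnit_iff_isCoprime _ _).mp (hz ▸ v.isUnit)
  obtain ⟨k, hk⟩ : a ∣ z - x := by
    simpa using (ZMod.intCast_eq_intCast_iff_dvd_sub x z a.natAbs).mp hzx.symm
  rw [Nat.cast_mul, Int.natCast_natAbs, Int.natCast_natAbs] at hzy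
  exact ⟨k, by simpa [← hk] using ((IsCoprime.abs_left_iff y z).mp hzy.of_mul_left_right).symm⟩

theorem exists_combination_add_mul_eq (x y : ℤ) {a : ℤ} (ha : a ≠ 0) :
    ∃ k l p q : ℤ, p * (x + a * k) + q * (y + a * l) = a := by
  obtain ⟨l, hl⟩ : ∃ l, y + a * l ≠ 0 := by
    by_cases hy : y = 0
    · exact ⟨1, by simpa [hy] using ha⟩
    · exact ⟨0, by simpa using hy⟩
  obtain ⟨x', a', hcop, hx, ha'⟩ := Int.exists_gcd_one (Int.gcd_pos_of_ne_zero_right x ha)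
  obtain ⟨k, p, q, hpq⟩ := exists_isCoprime_add_mul (Int.isCoprime_iff_gcd_eq_one.mpr hcop)
    (left_ne_zero_of_mul (ha' ▸ ha)) hl
  refine ⟨k, l, p * a', q * a, ?_⟩
  linear_combination a * hpq + p * a' * hx + (-p * x') * ha'

section Transvection

variable {R M : Type*} [CommRing R] [AddCommGroup M] [Module R M]

/-- The equivalence relation on vectors generated by the transvections `x ↦ x + m c ω(x, v) v` of
level `m` along vectors `v ∈ U`. -/
def TransvectionRel (ω : LinearMap.BilinForm R M) (m : R) (U : Submodule R M) : M → M → Prop :=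
  Relation.EqvGen fun x y ↦ ∃ v ∈ U, ∃ c, y = x + (m * c * ω x v) • v

/-- Two mutually orthogonal hyperbolic pairs `(e, f)` and `(e', f')` of the form `ω` inside `U`. -/
structure IsHyperbolicQuadruple (ω : LinearMap.BilinForm R M) (U : Submodule R M)
    (e f e' f' : M) : Prop where
  mem_e : e ∈ U
  mem_f : f ∈ U
  mem_e' : e' ∈ U
  mem_f' : f' ∈ U
  e_f : ω e f = 1
  e'_f' : ω e' f' = 1
  e_e' : ω e e' = 0
  e_f' : ω e f' = 0
  f_e' : ω f e' = 0
  f_f' : ω f f' = 0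

namespace TransvectionRel

section CommRing

variable {ω : LinearMap.BilinForm R M} {m : R} {U : Submodule R M} {x y z e f u v : M}

theorem symm (h : TransvectionRel ω m U x y) : TransvectionRel ω m U y x :=
  Relation.EqvGen.symm _ _ h

theorem trans (hxy : TransvectionRel ω m U x y) (hyz : TransvectionRel ω m U y z) :
    TransvectionRel ω m U x z :=
  Relation.EqvGen.trans _ _ _ hxy hyz

theorem add_smul (x : M) (hv : v ∈ U) (c : R) :
    TransvectionRel ω m U x (x + (m * c * ω x v) • v) :=
  Relation.EqvGen.rel _ _ ⟨v, hv, c, rfl⟩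

theorem exists_eq_one_iff (hω : ω.IsAlt) (h : TransvectionRel ω m U x y) :
    (∃ z ∈ U, ω x z = 1) ↔ ∃ z ∈ U, ω y z = 1 := by
  induction h with
  | rel x y h =>
    obtain ⟨v, hv, c, rfl⟩ := h
    refine ⟨fun ⟨z, hz, h⟩ ↦ ⟨z + (m * c * ω z v) • v, by aesop, ?_⟩,
      fun ⟨z, hz, h⟩ ↦ ⟨z - (m * c * ω z v) • v, by aesop, ?_⟩⟩
    all_goals
      simp only [map_add, map_sub, map_smul, LinearMap.add_apply, LinearMap.smul_apply,
        hω.self_eq_zero, smul_eq_mul, ← hω.neg_eq z v] at h ⊢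
      linear_combination h
  | refl x => rfl
  | symm x y _ ih => exact ih.symm
  | trans x y z _ _ ihxy ihyz => exact ihxy.trans ihyz

/- The transvections along `u + v`, `u` and `v` multiply up so that only the mixed terms remain. -/
theorem add_smul_add_smul (hω : ω.IsAlt) (x : M) (hu : u ∈ U) (hv : v ∈ U) (huv : ω u v = 0)
    (c : R) : TransvectionRel ω m U x (x + (m * c * ω x u) • v + (m * c * ω x v) • u) := by
  have hvu : ω v u = 0 := by rw [← hω.neg_eq, huv, neg_zero]
  have key := ((add_smul (ω := ω) (m := m) x (U.add_mem hu hv) c).trans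
    (add_smul _ hu (-c))).trans (add_smul _ hv (-c))
  convert key using 1
  simp only [map_add, map_smul, LinearMap.add_apply, LinearMap.smul_apply, hω.self_eq_zero, huv,
    hvu, smul_eq_mul]
  module

theorem add_smul_of_eq_one (hv : v ∈ U) (hxv : ω x v = 1) :
    TransvectionRel ω m U x (x + m • v) := by
  simpa [hxv] using add_smul (ω := ω) (m := m) x hv 1

/- Both `e` and `e + m u` move to `e + m v`. -/
theorem add_smul_of_eq_mul (hω : ω.IsAlt) (hu : u ∈ U) (hv : v ∈ U) (hev : ω e v = 1)
    (heu : ω e u = m * ω u v) : TransvectionRel ω m U (e + m • u) e := by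
  have huv : ω (e + m • u) (v - u) = 1 := by simp [hω.self_eq_zero, hev, heu]
  have h := add_smul_of_eq_one (m := m) (U.sub_mem hv hu) huv
  rw [show e + m • u + m • (v - u) = e + m • v by module] at h
  exact h.trans (add_smul_of_eq_one hv hev).symm

theorem add_smul_of_dvd (hω : ω.IsAlt) (hf : f ∈ U) (hu : u ∈ U) (hy : y ∈ U) (hef : ω e f = 1)
    (hey : ω e y = 0) (huy : ω u y = 1) (hdvd : m ∣ ω e u) :
    TransvectionRel ω m U (e + m • u) e := by
  obtain ⟨t, ht⟩ := hdvd
  refine add_smul_of_eq_mul hω hu (v := f + (t - ω u f) • y) (by aesop) ?_ ?_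
  · simp [hef, hey]
  · simp [huy, ht]

theorem exists_orthogonal_eq_one (hω : ω.IsAlt) (he : e ∈ U) (hef : ω e f = 1)
    (hy : y ∈ U) (hey : ω e y = 0) (huy : ω u y = ω (e + m • u) f) (hf : f ∈ U)
    (huni : ∃ z ∈ U, ω (e + m • u) z = 1) : ∃ w ∈ U, ω e w = 0 ∧ ω u w = 1 := by
  obtain ⟨z, hz, huz⟩ := huni
  refine ⟨(m * ω z f) • e + ω e z • y + m • (z - ω z f • e - ω e z • f), ?_, ?_, ?_⟩
  · aesop
  · simp [hω.self_eq_zero, hef, hey]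
  · simp only [map_add, map_sub, map_smul, LinearMap.add_apply, LinearMap.smul_apply, smul_eq_mul,
      hef] at huy huz ⊢
    linear_combination huz + ω e z * huy

/- One moves along `e` and along the component of `u` orthogonal to `f`. -/
theorem add_smul_of_orthogonal (hω : ω.IsAlt) (he : e ∈ U) (hu : u ∈ U) (hef : ω e f = 1)
    (heu : ω e u = 0) : TransvectionRel ω m U (f + m • u) f := by
  have hfe : ω f e = -1 := by rw [← hω.neg_eq, hef]
  obtain ⟨y, hy⟩ : ∃ y, y = u - ω u f • e := ⟨_, rfl⟩
  have hyU : y ∈ U := by aesop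
  have hey : ω e y = 0 := by simp [hy, heu, hω.self_eq_zero]
  have hye : ω y e = 0 := by rw [← hω.neg_eq, hey, neg_zero]
  have hfy : ω f y = 0 := by simp [hy, hfe, ← hω.neg_eq u f]
  have key := (add_smul_add_smul (m := m) hω f he hyU hey (-1)).trans (add_smul _ he (-ω u f))
  refine symm ?_
  convert key using 1
  simp only [map_add, map_smul, LinearMap.add_apply, LinearMap.smul_apply, hfe, hfy,
    hye, hω.self_eq_zero, smul_eq_mul]
  rw [hy]
  module

end CommRing

section Int

variable {M : Type*} [AddCommGroup M] {e f e' f' u : M} {ω : LinearMap.BilinForm ℤ M} {m : ℤ}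
  {U : Submodule ℤ M}

/- The move along `f` and `v ∈ ⟨e', f'⟩` adds `ω (e + m u) f • v` to the `⟨e', f'⟩`-component of
`u`, after which a combination of its coordinates equals `ω (e + m u) f`. -/
theorem exists_rel_of_ne_zero (hω : ω.IsAlt) (hq : IsHyperbolicQuadruple ω U e f e' f')
    (hu : u ∈ U) (hdvd : m ∣ ω e u) (hne : ω (e + m • u) f ≠ 0) :
    ∃ u' ∈ U, TransvectionRel ω m U (e + m • u) (e + m • u') ∧ m ∣ ω e u' ∧
      ∃ y ∈ U, ω e y = 0 ∧ ω u' y = ω (e + m • u') f := by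
  obtain ⟨-, hf, he', hf', hef, hef', hee', hef'0, hfe', hff'⟩ := hq
  obtain ⟨k, l, p, q, hkl⟩ := exists_combination_add_mul_eq (ω u f') (ω e' u) hne
  obtain ⟨a, ha⟩ : ∃ a, a = ω (e + m • u) f := ⟨_, rfl⟩
  rw [← ha] at hkl
  obtain ⟨v, hv⟩ : ∃ v, v = k • e' + l • f' := ⟨_, rfl⟩
  have hvU : v ∈ U := hv ▸ U.add_mem (U.smul_mem _ he') (U.smul_mem _ hf')
  have hev : ω e v = 0 := by simp [hv, hee', hef'0]
  have hfv : ω f v = 0 := by simp [hv, hfe', hff']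
  obtain ⟨u', hu'⟩ : ∃ u', u' = u + a • v + (m * ω u v) • f := ⟨_, rfl⟩
  have hu'U : u' ∈ U :=
    hu' ▸ U.add_mem (U.add_mem hu (U.smul_mem _ hvU)) (U.smul_mem _ hf)
  have hu'f : ω (e + m • u') f = a := by
    simp [ha, hu', ← hω.neg_eq f v, hfv, hω.self_eq_zero]
  have hu'f' : ω u' f' = ω u f' + a * k := by simp [hu', hv, hef', hω.self_eq_zero, hff']
  have hu'e' : ω u' e' = -(ω e' u + a * l) := by
    simp [hu', hv, hω.self_eq_zero, hfe', ← hω.neg_eq e' f', ← hω.neg_eq e' u, hef']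
    ring
  refine ⟨u', hu'U, ?_, ?_, p • f' - q • e', U.sub_mem (U.smul_mem _ hf') (U.smul_mem _ he'),
    by simp [hee', hef'0], ?_⟩
  · convert add_smul_add_smul hω (e + m • u) hf hvU hfv 1 using 1
    rw [← ha, hu']
    simp only [map_add, map_smul, LinearMap.add_apply, LinearMap.smul_apply, hev, smul_eq_mul]
    module
  · rw [hu']
    simpa [hev, hef] using hdvd
  · rw [hu'f, map_sub, map_smul, map_smul, hu'f', hu'e', smul_eq_mul, smul_eq_mul]
    linear_combination hkl

theorem add_smul_of_dvd_of_ne_zero (hω : ω.IsAlt) (hq : IsHyperbolicQuadruple ω U e f e' f')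
    (hu : u ∈ U) (huni : ∃ z ∈ U, ω (e + m • u) z = 1) (hdvd : m ∣ ω e u)
    (hne : ω (e + m • u) f ≠ 0) : TransvectionRel ω m U (e + m • u) e := by
  obtain ⟨u', hu', hmove, hdvd', y, hy, hey, huy⟩ := exists_rel_of_ne_zero hω hq hu hdvd hne
  obtain ⟨w, hw, hew, huw⟩ := exists_orthogonal_eq_one hω hq.mem_e hq.e_f hy hey huy hq.mem_f
    ((exists_eq_one_iff hω hmove).mp huni)
  exact hmove.trans (add_smul_of_dvd hω hq.mem_f hu' hw hq.e_f hew huw hdvd')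

theorem add_smul_of_unimodular (hω : ω.IsAlt) (hm : ¬IsUnit m)
    (hq : IsHyperbolicQuadruple ω U e f e' f') (hu : u ∈ U)
    (huni : ∃ z ∈ U, ω (e + m • u) z = 1) :
    TransvectionRel ω m U (e + m • u) e := by
  obtain ⟨hf, hef⟩ := And.intro hq.mem_f hq.e_f
  have ha : ω (e + m • u) f = 1 + m * ω u f := by simp [hef]
  obtain ⟨u', hu'⟩ : ∃ u', u' = u - (ω e u * (1 + m * ω u f)) • f := ⟨_, rfl⟩
  have hmove : TransvectionRel ω m U (e + m • u) (e + m • u') := by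
    convert add_smul (e + m • u) hf (-ω e u) using 1
    rw [ha, hu']
    module
  have ha' : ω (e + m • u') f = 1 + m * ω u f := by simp [hu', hef, hω.self_eq_zero]
  refine hmove.trans <| add_smul_of_dvd_of_ne_zero hω hq (by aesop)
    ((exists_eq_one_iff hω hmove).mp huni) ⟨-(ω e u * ω u f), ?_⟩ ?_
  · simp [hu', hef]
    ring
  · rw [ha']
    exact fun h ↦ hm (isUnit_of_dvd_one ⟨-ω u f, by linarith⟩)

end Int

end TransvectionRel

end Transvection

section Form

variable (ι R : Type*) [Fintype ι] [DecidableEq ι] [CommRing R]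

/-- The standard symplectic form `xᵀ J y` on `R^{2ι}`. -/
def form : LinearMap.BilinForm R (ι ⊕ ι → R) :=
  Matrix.toBilin' (J ι R)

variable {ι R}

theorem form_apply (x y : ι ⊕ ι → R) :
    form ι R x y = ∑ i, (x (inr i) * y (inl i) - x (inl i) * y (inr i)) := by
  simp [form, toBilin'_apply', J, fromBlocks_mulVec, dotProduct, neg_mulVec, sub_eq_neg_add,
    Finset.sum_add_distrib]

theorem form_isAlt : (form ι R).IsAlt := fun x ↦ by
  simp [form_apply, mul_comm]

theorem mem_symplecticGroup_iff_form {A : Matrix (ι ⊕ ι) (ι ⊕ ι) R} :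
    A ∈ symplecticGroup ι R ↔ ∀ x y, form ι R (A *ᵥ x) (A *ᵥ y) = form ι R x y := by
  rw [SymplecticGroup.mem_iff', ← (toBilin' (R₁ := R) (n := ι ⊕ ι)).injective.eq_iff,
    ← toBilin'_comp, LinearMap.ext_iff₂]
  rfl

theorem form_smul_smul (A : symplecticGroup ι R) (x y : ι ⊕ ι → R) :
    form ι R (A • x) (A • y) = form ι R x y :=
  mem_symplecticGroup_iff_form.mp A.2 x y

instance : FaithfulSMul (symplecticGroup ι R) (ι ⊕ ι → R) :=
  ⟨fun h ↦ Subtype.ext (mulVec_injective (funext h))⟩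

theorem one_add_smul_vecMulVec_mulVec (u x : ι ⊕ ι → R) (c : R) :
    (1 + c • vecMulVec u (J ι R *ᵥ u)) *ᵥ x = x + (c * form ι R x u) • u := by
  simp [form, toBilin'_apply', add_mulVec, smul_mulVec, vecMulVec_mulVec, mul_smul,
    dotProduct_comm (J ι R *ᵥ u)]

/-- The symplectic transvection `x ↦ x + c ω(x, u) u`. -/
def transvection (u : ι ⊕ ι → R) (c : R) : symplecticGroup ι R :=
  ⟨1 + c • vecMulVec u (J ι R *ᵥ u), mem_symplecticGroup_iff_form.mpr fun x y ↦ by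
    simp only [one_add_smul_vecMulVec_mulVec, map_add, map_smul, LinearMap.add_apply,
      LinearMap.smul_apply, smul_eq_mul, form_isAlt.self_eq_zero, ← form_isAlt.neg_eq u y]
    ring⟩

@[simp]
theorem transvection_smul (u : ι ⊕ ι → R) (c : R) (x : ι ⊕ ι → R) :
    transvection u c • x = x + (c * form ι R x u) • u :=
  one_add_smul_vecMulVec_mulVec u x c

theorem transvection_pow (u : ι ⊕ ι → R) (c : R) (n : ℕ) :
    transvection u c ^ n = transvection u (n * c) := by
  refine FaithfulSMul.eq_of_smul_eq_smul (α := ι ⊕ ι → R) fun x ↦ ?_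
  induction n generalizing x with
  | zero => simp
  | succ n ih =>
    simp only [pow_succ, mul_smul, ih, transvection_smul, map_add, map_smul, LinearMap.add_apply,
      LinearMap.smul_apply, form_isAlt.self_eq_zero, smul_zero, Nat.cast_succ]
    module

theorem exists_smul_eq_of_transvectionRel {G : Subgroup (symplecticGroup ι R)} {m : R}
    {U : Submodule R (ι ⊕ ι → R)} (hG : ∀ u ∈ U, ∀ c, transvection u (m * c) ∈ G)
    {x y : ι ⊕ ι → R} (h : TransvectionRel (form ι R) m U x y) : ∃ A ∈ G, A • x = y := by
  induction h with
  | rel x y h =>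
    obtain ⟨v, hv, c, rfl⟩ := h
    exact ⟨_, hG v hv c, transvection_smul v _ x⟩
  | refl x => exact ⟨1, G.one_mem, one_smul _ x⟩
  | symm x y _ ih =>
    obtain ⟨A, hA, rfl⟩ := ih
    exact ⟨A⁻¹, G.inv_mem hA, inv_smul_smul A x⟩
  | trans x y z _ _ ihxy ihyz =>
    obtain ⟨A, hA, rfl⟩ := ihxy
    obtain ⟨B, hB, rfl⟩ := ihyz
    exact ⟨B * A, G.mul_mem hB hA, mul_smul B A x⟩

end Form

section Block

variable {ι R : Type*} [CommRing R]

variable (R) in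
/-- The sum of the standard hyperbolic planes `⟨e_i, f_i⟩` with `i ∈ s`. -/
def block (s : Set ι) : Submodule R (ι ⊕ ι → R) where
  carrier := {x | ∀ i ∉ s, x (inl i) = 0 ∧ x (inr i) = 0}
  zero_mem' := by simp
  add_mem' hx hy i hi := by simp [hx i hi, hy i hi]
  smul_mem' c x hx i hi := by simp [hx i hi]

theorem block_mono {s t : Set ι} (hst : s ⊆ t) : block R s ≤ block R t :=
  fun _ hx i hi ↦ hx i (Set.notMem_subset hst hi)

theorem exists_add_mem_block (s : Set ι) (x : ι ⊕ ι → R) :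
    ∃ y ∈ block R s, ∃ z ∈ block R sᶜ, y + z = x := by
  classical
  refine ⟨fun k ↦ if k.elim id id ∈ s then x k else 0, fun i hi ↦ by simp [hi],
    fun k ↦ if k.elim id id ∈ s then 0 else x k, fun i hi ↦ ?_, ?_⟩
  · simp [Set.notMem_compl_iff.mp hi]
  · ext k
    simp only [Pi.add_apply]
    split_ifs <;> simp

variable [DecidableEq ι]

variable (R) in
/-- The first vector `e_i` of the `i`-th standard hyperbolic pair, for the sign convention of
`Matrix.J`. -/
def eVec (i : ι) : ι ⊕ ι → R := Pi.single (inr i) 1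

variable (R) in
/-- The second vector `f_i` of the `i`-th standard hyperbolic pair. -/
def fVec (i : ι) : ι ⊕ ι → R := Pi.single (inl i) 1

theorem eVec_mem_block {s : Set ι} {i : ι} (hi : i ∈ s) : eVec R i ∈ block R s := fun j hj ↦ by
  simp [eVec, ne_of_mem_of_not_mem hi hj]

theorem fVec_mem_block {s : Set ι} {i : ι} (hi : i ∈ s) : fVec R i ∈ block R s := fun j hj ↦ by
  simp [fVec, ne_of_mem_of_not_mem hi hj]

variable [Fintype ι] {s : Set ι} {x y : ι ⊕ ι → R} {A B : symplecticGroup ι R}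

@[simp]
theorem form_eVec_left (i : ι) (x : ι ⊕ ι → R) : form ι R (eVec R i) x = x (inl i) := by
  simp [form_apply, eVec, Pi.single_apply]

@[simp]
theorem form_fVec_left (i : ι) (x : ι ⊕ ι → R) : form ι R (fVec R i) x = -x (inr i) := by
  simp [form_apply, fVec, Pi.single_apply]

theorem form_eq_zero_of_mem_block (hx : x ∈ block R s) (hy : y ∈ block R sᶜ) :
    form ι R x y = 0 := by
  rw [form_apply]
  refine Finset.sum_eq_zero fun i _ ↦ ?_
  by_cases hi : i ∈ s
  · simp [hy i (not_not_intro hi)]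
  · simp [hx i hi]

theorem mem_block_compl_iff : x ∈ block R sᶜ ↔ ∀ y ∈ block R s, form ι R y x = 0 := by
  refine ⟨fun hx y hy ↦ form_eq_zero_of_mem_block hy hx, fun h i hi ↦ ?_⟩
  rw [Set.notMem_compl_iff] at hi
  simpa using And.intro (h _ (eVec_mem_block hi)) (h _ (fVec_mem_block hi))

variable (R) in
/-- The subgroup of the symplectic group fixing the hyperbolic planes with indices in `s`
pointwise. -/
abbrev blockFixingSubgroup (s : Set ι) : Subgroup (symplecticGroup ι R) :=
  fixingSubgroup (symplecticGroup ι R) (block R s : Set (ι ⊕ ι → R))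

theorem mem_blockFixingSubgroup_iff :
    A ∈ blockFixingSubgroup R s ↔
      ∀ i ∈ s, A • eVec R i = eVec R i ∧ A • fVec R i = fVec R i := by
  rw [mem_fixingSubgroup_iff]
  refine ⟨fun h i hi ↦ ⟨h _ (eVec_mem_block hi), h _ (fVec_mem_block hi)⟩, fun h x hx ↦ ?_⟩
  have hsum : x = ∑ i, (x (inr i) • eVec R i + x (inl i) • fVec R i) := by
    ext (j | j) <;> simp [eVec, fVec, Pi.single_apply]
  rw [hsum, Finset.smul_sum]
  refine Finset.sum_congr rfl fun i _ ↦ ?_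
  by_cases hi : i ∈ s
  · rw [smul_add, smul_comm A, smul_comm A, (h i hi).1, (h i hi).2]
  · simp [hx i hi]

theorem smul_mem_block_compl (hA : A ∈ blockFixingSubgroup R s) (hx : x ∈ block R sᶜ) :
    A • x ∈ block R sᶜ :=
  mem_block_compl_iff.mpr fun y hy ↦ by
    rw [← (mem_fixingSubgroup_iff _).mp hA y hy, form_smul_smul, form_eq_zero_of_mem_block hy hx]

theorem transvection_mem_fixingSubgroup {U : Set (ι ⊕ ι → R)} {u : ι ⊕ ι → R} (c : R)
    (hu : ∀ x ∈ U, form ι R x u = 0) :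
    transvection u c ∈ fixingSubgroup (symplecticGroup ι R) U :=
  (mem_fixingSubgroup_iff _).mpr fun x hx ↦ by simp [hu x hx]

theorem commute_of_mem_blockFixingSubgroup (hA : A ∈ blockFixingSubgroup R s)
    (hB : B ∈ blockFixingSubgroup R sᶜ) : Commute A B := by
  refine FaithfulSMul.eq_of_smul_eq_smul (α := ι ⊕ ι → R) fun x ↦ ?_
  obtain ⟨y, hy, z, hz, rfl⟩ := exists_add_mem_block s x
  have hBy : B • y ∈ block R s := by
    simpa using smul_mem_block_compl hB (by rwa [compl_compl])
  have hAz : A • z ∈ block R sᶜ := smul_mem_block_compl hA hz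
  rw [mem_fixingSubgroup_iff] at hA hB
  simp only [mul_smul, smul_add, hA _ hy, hB _ hz, hA _ hBy, hB _ hAz]

end Block

section CongruenceSubgroup

variable {ι : Type*} [Fintype ι] [DecidableEq ι]

variable (ι) in
/-- Reduction modulo `m`, with values in the general linear group. -/
def reduction (m : ℕ) : symplecticGroup ι ℤ →* GL (ι ⊕ ι) (ZMod m) :=
  ((Int.castRingHom (ZMod m)).mapMatrix.toMonoidHom.comp (symplecticGroup ι ℤ).subtype).toHomUnits

variable (ι) in
/-- The principal congruence subgroup of level `m` of the integral symplectic group. -/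
def congruenceSubgroup (m : ℕ) : Subgroup (symplecticGroup ι ℤ) :=
  (reduction ι m).ker

instance (m : ℕ) : (congruenceSubgroup ι m).Normal :=
  (reduction ι m).normal_ker

variable {m : ℕ} {A : symplecticGroup ι ℤ}

theorem mem_congruenceSubgroup_iff :
    A ∈ congruenceSubgroup ι m ↔ ∃ X : Matrix (ι ⊕ ι) (ι ⊕ ι) ℤ, A.1 = 1 + (m : ℤ) • X := by
  have h : A ∈ congruenceSubgroup ι m ↔
      A.1.map (Int.cast : ℤ → ZMod m) = (1 : Matrix (ι ⊕ ι) (ι ⊕ ι) ℤ).map Int.cast := by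
    rw [congruenceSubgroup, MonoidHom.mem_ker, Units.ext_iff,
      Matrix.map_one _ Int.cast_zero Int.cast_one]
    rfl
  simp only [h, ← Matrix.ext_iff, map_apply, eq_comm (b := ((1 : Matrix _ _ ℤ) _ _ : ZMod m)),
    ZMod.intCast_eq_intCast_iff_dvd_sub, dvd_iff_exists_eq_mul_right, Matrix.add_apply,
    Matrix.smul_apply, smul_eq_mul, sub_eq_iff_eq_add', Classical.skolem]
  rfl

theorem exists_smul_eq_add_of_mem_congruenceSubgroup (hA : A ∈ congruenceSubgroup ι m)
    (x : ι ⊕ ι → ℤ) : ∃ u, A • x = x + (m : ℤ) • u := by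
  obtain ⟨X, hX⟩ := mem_congruenceSubgroup_iff.mp hA
  refine ⟨X *ᵥ x, ?_⟩
  change A.1 *ᵥ x = _
  rw [hX, add_mulVec, one_mulVec, smul_mulVec]

theorem transvection_mem_congruenceSubgroup (m : ℕ) (u : ι ⊕ ι → ℤ) (c : ℤ) :
    transvection u (m * c) ∈ congruenceSubgroup ι m :=
  mem_congruenceSubgroup_iff.mpr
    ⟨c • vecMulVec u (J ι ℤ *ᵥ u), by simp [transvection, mul_smul]⟩

theorem congruenceSubgroup_one : congruenceSubgroup ι 1 = ⊤ :=
  eq_top_iff.mpr fun _ _ ↦ Units.ext (Subsingleton.elim _ _)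

theorem commutator_congruenceSubgroup_le (a b : ℕ) :
    ⁅congruenceSubgroup ι a, congruenceSubgroup ι b⁆ ≤ congruenceSubgroup ι (a * b) := by
  refine Subgroup.commutator_le.mpr fun A hA B hB ↦ ?_
  obtain ⟨X, hX⟩ := mem_congruenceSubgroup_iff.mp hA
  obtain ⟨Y, hY⟩ := mem_congruenceSubgroup_iff.mp hB
  have hdiff : (A * B).1 - (B * A).1 = ((a * b : ℕ) : ℤ) • (X * Y - Y * X) := by
    simp only [Submonoid.coe_mul, hX, hY, mul_add, add_mul, mul_one, one_mul, smul_mul_assoc,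
      mul_smul_comm]
    push_cast
    module
  refine mem_congruenceSubgroup_iff.mpr ⟨(X * Y - Y * X) * (A⁻¹ * B⁻¹).1, ?_⟩
  rw [← smul_mul_assoc, ← hdiff, sub_mul, ← Submonoid.coe_mul, ← Submonoid.coe_mul]
  simp [commutatorElement_def, mul_assoc]

end CongruenceSubgroup

section Reduction

variable {ι : Type*} [Fintype ι] [DecidableEq ι] {m : ℕ} {N : Subgroup (symplecticGroup ι ℤ)}
  {s : Set ι} {i j : ι} {A : symplecticGroup ι ℤ}

theorem isHyperbolicQuadruple_block (hi : i ∈ s) (hj : j ∈ s) (hij : i ≠ j) :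
    IsHyperbolicQuadruple (form ι ℤ) (block ℤ s) (eVec ℤ i) (fVec ℤ i) (eVec ℤ j) (fVec ℤ j) where
  mem_e := eVec_mem_block hi
  mem_f := fVec_mem_block hi
  mem_e' := eVec_mem_block hj
  mem_f' := fVec_mem_block hj
  e_f := by simp [fVec]
  e'_f' := by simp [fVec]
  e_e' := by
    rw [form_eVec_left]
    simp [eVec]
  e_f' := by simp [fVec, hij]
  f_e' := by simp [eVec, hij]
  f_f' := by
    rw [form_fVec_left]
    simp [fVec]

theorem exists_smul_eq_add_mem_block (hm : m ≠ 0) (hA : A ∈ congruenceSubgroup ι m)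
    (hAs : A ∈ blockFixingSubgroup ℤ s) {x : ι ⊕ ι → ℤ} (hx : x ∈ block ℤ sᶜ) :
    ∃ u ∈ block ℤ sᶜ, A • x = x + (m : ℤ) • u := by
  obtain ⟨u, hu⟩ := exists_smul_eq_add_of_mem_congruenceSubgroup hA x
  have hmu : (m : ℤ) • u ∈ block ℤ sᶜ := by
    simpa [hu] using sub_mem (smul_mem_block_compl hAs hx) hx
  exact ⟨u, fun k hk ↦ by simpa [hm] using hmu k hk, hu⟩

theorem exists_smul_eVec_eq (hm : 2 ≤ m)
    (hN : ∀ (u : ι ⊕ ι → ℤ) (c : ℤ), transvection u (m * c) ∈ N) (hA : A ∈ congruenceSubgroup ι m)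
    (hAs : A ∈ blockFixingSubgroup ℤ s) (hi : i ∉ s) (hj : j ∉ s) (hij : i ≠ j) :
    ∃ B ∈ N ⊓ blockFixingSubgroup ℤ s, (B * A) • eVec ℤ i = eVec ℤ i := by
  have hq : IsHyperbolicQuadruple (form ι ℤ) (block ℤ sᶜ) _ _ _ _ :=
    isHyperbolicQuadruple_block hi hj hij
  obtain ⟨u, hu, hAu⟩ := exists_smul_eq_add_mem_block (by lia) hA hAs hq.mem_e
  have huni : ∃ z ∈ block ℤ sᶜ, form ι ℤ (eVec ℤ i + (m : ℤ) • u) z = 1 :=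
    ⟨A • fVec ℤ i, smul_mem_block_compl hAs hq.mem_f, by rw [← hAu, form_smul_smul, hq.e_f]⟩
  have hrel := TransvectionRel.add_smul_of_unimodular form_isAlt
    (by rw [Int.ofNat_isUnit, Nat.isUnit_iff]; lia) hq hu huni
  obtain ⟨B, hB, hBA⟩ := exists_smul_eq_of_transvectionRel (G := N ⊓ fixingSubgroup _ _)
    (fun v hv c ↦ ⟨hN v c, transvection_mem_fixingSubgroup _ (mem_block_compl_iff.mp hv)⟩) hrel
  exact ⟨B, hB, by rw [mul_smul, hAu, hBA]⟩

theorem exists_smul_fVec_eq (hm : m ≠ 0)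
    (hN : ∀ (u : ι ⊕ ι → ℤ) (c : ℤ), transvection u (m * c) ∈ N) (hA : A ∈ congruenceSubgroup ι m)
    (hAs : A ∈ blockFixingSubgroup ℤ s) (hi : i ∉ s) (hAe : A • eVec ℤ i = eVec ℤ i) :
    ∃ B ∈ N ⊓ fixingSubgroup (symplecticGroup ι ℤ) (insert (eVec ℤ i) (block ℤ s : Set _)),
      (B * A) • fVec ℤ i = fVec ℤ i := by
  obtain ⟨he, hf⟩ : eVec ℤ i ∈ block ℤ sᶜ ∧ fVec ℤ i ∈ block ℤ sᶜ :=
    ⟨eVec_mem_block hi, fVec_mem_block hi⟩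
  have hef : form ι ℤ (eVec ℤ i) (fVec ℤ i) = 1 := by simp [fVec]
  obtain ⟨u, hu, hAu⟩ := exists_smul_eq_add_mem_block hm hA hAs hf
  have heu : form ι ℤ (eVec ℤ i) u = 0 := by
    have h := form_smul_smul A (eVec ℤ i) (fVec ℤ i)
    rw [hAe, hAu, map_add, map_smul, hef] at h
    simpa [hm] using h
  have hrel := TransvectionRel.add_smul_of_orthogonal (m := (m : ℤ)) form_isAlt
    (U := block ℤ sᶜ ⊓ LinearMap.ker (form ι ℤ (eVec ℤ i)))
    ⟨he, form_isAlt.self_eq_zero _⟩ ⟨hu, heu⟩ hef heu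
  have hstab (v) (hv : v ∈ block ℤ sᶜ ⊓ LinearMap.ker (form ι ℤ (eVec ℤ i))) (c) :
      transvection v (m * c) ∈ N ⊓ fixingSubgroup _ (insert (eVec ℤ i) (block ℤ s : Set _)) :=
    ⟨hN v c, transvection_mem_fixingSubgroup _
      (Set.forall_mem_insert.mpr ⟨hv.2, mem_block_compl_iff.mp hv.1⟩)⟩
  obtain ⟨B, hB, hBA⟩ := exists_smul_eq_of_transvectionRel hstab hrel
  exact ⟨B, hB, by rw [mul_smul, hAu, hBA]⟩

theorem exists_mul_mem_blockFixingSubgroup_insert (hm : 2 ≤ m) (hNm : N ≤ congruenceSubgroup ι m)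
    (hN : ∀ (u : ι ⊕ ι → ℤ) (c : ℤ), transvection u (m * c) ∈ N) (hA : A ∈ congruenceSubgroup ι m)
    (hAs : A ∈ blockFixingSubgroup ℤ s) (hi : i ∉ s) (hj : j ∉ s) (hij : i ≠ j) :
    ∃ B ∈ N, B * A ∈ blockFixingSubgroup ℤ (insert i s) := by
  obtain ⟨B, ⟨hB, hBs⟩, hBe⟩ := exists_smul_eVec_eq hm hN hA hAs hi hj hij
  have hBA := mul_mem hBs hAs
  obtain ⟨C, ⟨hC, hCs⟩, hCf⟩ :=
    exists_smul_fVec_eq (by lia) hN (mul_mem (hNm hB) hA) hBA hi hBe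
  have hCBA := mul_mem (fixingSubgroup_antitone _ _ (Set.subset_insert _ _) hCs) hBA
  refine ⟨C * B, mul_mem hC hB, mem_blockFixingSubgroup_iff.mpr <|
    Set.forall_mem_insert.mpr ⟨⟨?_, by rw [mul_assoc, hCf]⟩, ?_⟩⟩
  · rw [mul_assoc, mul_smul, hBe]
    exact (mem_fixingSubgroup_iff _).mp hCs _ (Set.mem_insert _ _)
  · rw [mul_assoc]
    exact mem_blockFixingSubgroup_iff.mp hCBA

theorem exists_mul_mem_blockFixingSubgroup_compl (hm : 2 ≤ m) (hNm : N ≤ congruenceSubgroup ι m)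
    (hN : ∀ (u : ι ⊕ ι → ℤ) (c : ℤ), transvection u (m * c) ∈ N) (hA : A ∈ congruenceSubgroup ι m)
    (i : ι) : ∃ B ∈ N, B * A ∈ blockFixingSubgroup ℤ {i}ᶜ := by
  refine Set.Finite.induction_on_subset ({i}ᶜ : Set ι) (Set.toFinite _)
    (motive := fun s _ ↦ ∃ B ∈ N, B * A ∈ blockFixingSubgroup ℤ s)
    ⟨1, N.one_mem, mem_blockFixingSubgroup_iff.mpr (by simp)⟩ fun {j s} hj hs hjs ih ↦ ?_
  obtain ⟨B, hB, hBA⟩ := ih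
  obtain ⟨C, hC, hCBA⟩ :=
    exists_mul_mem_blockFixingSubgroup_insert hm hNm hN (mul_mem (hNm hB) hA) hBA hjs
      (fun hi ↦ hs hi rfl) hj
  exact ⟨C * B, mul_mem hC hB, by rwa [mul_assoc]⟩

/- Modulo `N`, two elements of the congruence subgroup can be made to act on different planes
only, where they commute. -/
theorem commutator_congruenceSubgroup_le_of_transvection_mem [Nontrivial ι] [N.Normal] (hm : 2 ≤ m)
    (hN : ∀ (u : ι ⊕ ι → ℤ) (c : ℤ), transvection u (m * c) ∈ N) :
    ⁅congruenceSubgroup ι m, congruenceSubgroup ι m⁆ ≤ N := by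
  obtain ⟨i, j, hij⟩ := exists_pair_ne ι
  refine Subgroup.commutator_le.mpr fun A hA B hB ↦ ?_
  have hN' (u : ι ⊕ ι → ℤ) (c : ℤ) : transvection u (m * c) ∈ N ⊓ congruenceSubgroup ι m :=
    ⟨hN u c, transvection_mem_congruenceSubgroup m u c⟩
  obtain ⟨C, hC, hCA⟩ := exists_mul_mem_blockFixingSubgroup_compl hm inf_le_right hN' hA i
  obtain ⟨D, hD, hDB⟩ := exists_mul_mem_blockFixingSubgroup_compl hm inf_le_right hN' hB j
  have hcomm : Commute (C * A) (D * B) := commute_of_mem_blockFixingSubgroup hCA <|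
    fixingSubgroup_antitone _ _ (block_mono (by simpa using hij.symm)) hDB
  have hmk {X Y : symplecticGroup ι ℤ} (hX : X ∈ N ⊓ congruenceSubgroup ι m) :
      QuotientGroup.mk' N (X * Y) = QuotientGroup.mk' N Y := by
    rw [map_mul, QuotientGroup.mk'_apply N X, (QuotientGroup.eq_one_iff X).mpr hX.1, one_mul]
  have hquot := hcomm.map (QuotientGroup.mk' N)
  rwa [hmk hC, hmk hD, ← commutatorElement_eq_one_iff_commute, ← map_commutatorElement,
    QuotientGroup.mk'_apply, QuotientGroup.eq_one_iff] at hquot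

end Reduction

section SimpleQuotient

variable {G H : Type*} [Group G] [Group H]

theorem le_ker_or_le_ker_of_commutator_le_ker [IsSimpleGroup H] (hH : ¬IsMulCommutative H)
    {f : G →* H} (hf : Function.Surjective f) {A B : Subgroup G} [hA : A.Normal] [hB : B.Normal]
    (h : ⁅A, B⁆ ≤ f.ker) : A ≤ f.ker ∨ B ≤ f.ker := by
  simp only [← Subgroup.map_eq_bot_iff] at h ⊢
  refine (hA.map f hf).eq_bot_or_eq_top.imp_right fun hA' ↦
    (hB.map f hf).eq_bot_or_eq_top.resolve_right fun hB' ↦ hH ?_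
  rwa [Subgroup.map_commutator, hA', hB', ← commutator_def, commutator_eq_bot_iff] at h

theorem subgroupOf_le_ker_or_of_commutator_le [IsSimpleGroup H] (hH : ¬IsMulCommutative H)
    {K : Subgroup G} {f : K →* H} (hf : Function.Surjective f) {A B C : Subgroup G} [A.Normal]
    [B.Normal] (h : ⁅A, B⁆ ≤ C) (hC : C.subgroupOf K ≤ f.ker) :
    A.subgroupOf K ≤ f.ker ∨ B.subgroupOf K ≤ f.ker := by
  refine le_ker_or_le_ker_of_commutator_le_ker hH hf (le_trans ?_ hC)
  refine Subgroup.map_le_iff_le_comap.mp ?_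
  rw [Subgroup.map_commutator]
  exact (Subgroup.commutator_mono (Subgroup.map_comap_le _ _) (Subgroup.map_comap_le _ _)).trans h

variable {ι : Type*} [Fintype ι] [DecidableEq ι] {K : Subgroup (symplecticGroup ι ℤ)} {f : K →* H}

theorem exists_commutator_congruenceSubgroup_le [Nontrivial ι] (N : Subgroup (symplecticGroup ι ℤ))
    [N.Normal] [N.FiniteIndex] :
    ∃ m ≠ 0, ⁅congruenceSubgroup ι m, congruenceSubgroup ι m⁆ ≤ N := by
  have hN := Subgroup.FiniteIndex.index_ne_zero (H := N)
  refine ⟨N.index * 2, by positivity,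
    commutator_congruenceSubgroup_le_of_transvection_mem (by lia) fun u c ↦ ?_⟩
  rw [Nat.cast_mul, mul_assoc, ← transvection_pow]
  exact N.pow_index_mem _

theorem exists_congruenceSubgroup_subgroupOf_le_ker [Nontrivial ι] [Finite H] [IsSimpleGroup H]
    (hH : ¬IsMulCommutative H) [hK : K.FiniteIndex] (hf : Function.Surjective f) :
    ∃ m ≠ 0, (congruenceSubgroup ι m).subgroupOf K ≤ f.ker := by
  let M := f.ker.map K.subtype
  have hM : M.FiniteIndex := ⟨by
    rw [Subgroup.index_map_subtype]
    exact mul_ne_zero Subgroup.FiniteIndex.index_ne_zero hK.index_ne_zero⟩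
  obtain ⟨m, hm, hcomm⟩ := exists_commutator_congruenceSubgroup_le M.normalCore
  have hcore : M.normalCore.subgroupOf K ≤ f.ker :=
    (Subgroup.comap_mono M.normalCore_le).trans_eq
      (Subgroup.comap_map_eq_self_of_injective K.subtype_injective _)
  exact ⟨m, hm, (subgroupOf_le_ker_or_of_commutator_le hH hf hcomm hcore).elim id id⟩

theorem exists_prime_congruenceSubgroup_subgroupOf_le_ker [IsSimpleGroup H]
    (hH : ¬IsMulCommutative H) (hf : Function.Surjective f) {m : ℕ} (hm : m ≠ 0)
    (h : (congruenceSubgroup ι m).subgroupOf K ≤ f.ker) :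
    ∃ p : ℕ, p.Prime ∧ (congruenceSubgroup ι p).subgroupOf K ≤ f.ker := by
  induction m using Nat.recOnMul with
  | zero => exact absurd rfl hm
  | one =>
    have htriv (x : H) : x = 1 := by
      obtain ⟨k, rfl⟩ := hf x
      exact h (by simp [congruenceSubgroup_one])
    exact absurd (isMulCommutative_iff.mpr fun x y ↦ by rw [htriv x, htriv y]) hH
  | prime p hp => exact ⟨p, hp, h⟩
  | mul a b iha ihb =>
    have hcomm := commutator_congruenceSubgroup_le (ι := ι) a b
    exact (subgroupOf_le_ker_or_of_commutator_le hH hf hcomm h).elim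
      (iha (left_ne_zero_of_mul hm)) (ihb (right_ne_zero_of_mul hm))

theorem exists_prime_surjective_of_subgroup_generalLinearGroup [Nontrivial ι] [Finite H]
    [IsSimpleGroup H] (hH : ¬IsMulCommutative H) [K.FiniteIndex] (hf : Function.Surjective f) :
    ∃ p : ℕ, p.Prime ∧ ∃ (L : Subgroup (GL (ι ⊕ ι) (ZMod p))) (φ : L →* H),
      Function.Surjective φ := by
  obtain ⟨m, hm, hm_ker⟩ := exists_congruenceSubgroup_subgroupOf_le_ker hH hf
  obtain ⟨p, hp, hp_ker⟩ := exists_prime_congruenceSubgroup_subgroupOf_le_ker hH hf hm hm_ker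
  let π := (reduction ι p).comp K.subtype
  have hker : π.rangeRestrict.ker ≤ f.ker := by
    rwa [MonoidHom.ker_rangeRestrict, ← MonoidHom.comap_ker]
  let φ := π.rangeRestrict.liftOfSurjective π.rangeRestrict_surjective ⟨f, hker⟩
  refine ⟨p, hp, π.range, φ, Function.Surjective.of_comp (g := π.rangeRestrict) ?_⟩
  rw [← MonoidHom.coe_comp, MonoidHom.liftOfRightInverse_comp]
  exact hf

end SimpleQuotient

section NilpotentGroup

variable {G : Type*} [Group G] [Group.IsNilpotent G]

theorem inf_center_ne_bot {N : Subgroup G} [N.Normal] (hN : N ≠ ⊥) :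
    N ⊓ Subgroup.center G ≠ ⊥ := by
  intro hbot
  have hseries (n : ℕ) : N ⊓ Subgroup.upperCentralSeries G n = ⊥ := by
    induction n with
    | zero => rw [Subgroup.upperCentralSeries_zero, inf_bot_eq]
    | succ n ih =>
      refine (Subgroup.eq_bot_iff_forall _).mpr fun x ⟨hxN, hx⟩ ↦ ?_
      refine (Subgroup.eq_bot_iff_forall _).mp hbot x
        ⟨hxN, Subgroup.mem_center_iff.mpr fun y ↦ ?_⟩
      have hcomm : ⁅x, y⁆ ∈ N ⊓ Subgroup.upperCentralSeries G n :=
        ⟨Subgroup.commutator_le_left N ⊤ (Subgroup.commutator_mem_commutator hxN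
          (Subgroup.mem_top y)), Subgroup.mem_upperCentralSeries_succ_iff.mp hx y⟩
      rw [ih, Subgroup.mem_bot, commutatorElement_eq_one_iff_mul_comm] at hcomm
      exact hcomm.symm
  obtain ⟨n, hn⟩ := Group.IsNilpotent.nilpotent G
  exact hN (by simpa only [hn, inf_top_eq] using hseries n)

theorem exists_mem_commutator_mem_center_ne_one (hG : ¬IsMulCommutative G) :
    ∃ z ∈ commutator G, z ∈ Subgroup.center G ∧ z ≠ 1 := by
  obtain ⟨z, hz1⟩ := Subgroup.ne_bot_iff_exists_ne_one.mp
    (inf_center_ne_bot (mt (commutator_eq_bot_iff G).mp hG))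
  exact ⟨z, z.2.1, z.2.2, OneMemClass.coe_eq_one.not.mpr hz1⟩

end NilpotentGroup

section LinearGroup

variable {F E : Type*} [Field F] [AddCommGroup E] [Module F E]

/- Since `T ^ n = 1`, an eigenvector in the range of `T - 1` is killed by `1 + T + ⋯ + T ^ (n - 1)`,
hence is not fixed by `T`. -/
theorem exists_hasEigenvalue_ne_one [IsAlgClosed F] [FiniteDimensional F E] {T : End F E}
    {n : ℕ} (hT : T ^ n = 1) (hn : (n : F) ≠ 0) (hT1 : T ≠ 1) :
    ∃ ζ, T.HasEigenvalue ζ ∧ ζ ≠ 1 := by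
  let W := LinearMap.range (T - 1)
  have hmaps : ∀ x ∈ W, T x ∈ W := by
    rintro _ ⟨y, rfl⟩
    exact ⟨T y, by simp⟩
  have : Nontrivial W := Submodule.nontrivial_iff_ne_bot.mpr <|
    mt LinearMap.range_eq_bot.mp (sub_ne_zero.mpr hT1)
  obtain ⟨ζ, hζ⟩ := End.exists_eigenvalue (T.restrict hmaps)
  obtain ⟨x, hx⟩ := hζ.exists_hasEigenvector
  have hTx : T x = ζ • (x : E) := congrArg Subtype.val hx.apply_eq_smul
  have hx0 : (x : E) ≠ 0 := Subtype.coe_ne_coe.mpr hx.2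
  refine ⟨ζ, End.hasEigenvalue_of_hasEigenvector
    ⟨End.mem_eigenspace_iff.mpr hTx, hx0⟩, ?_⟩
  rintro rfl
  have hkill : (∑ i ∈ Finset.range n, T ^ i) x = 0 := by
    obtain ⟨y, hy⟩ := x.2
    rw [← hy, ← End.mul_apply, geom_sum_mul, hT, sub_self, LinearMap.zero_apply]
  have hfix (i : ℕ) : (T ^ i) x = x := by
    rw [End.pow_apply]
    exact Function.iterate_fixed (by rw [hTx, one_smul]) i
  simp only [LinearMap.sum_apply, hfix, Finset.sum_const, Finset.card_range] at hkill
  rw [← Nat.cast_smul_eq_nsmul F] at hkill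
  exact (smul_ne_zero hn hx0) hkill

theorem pow_eq_one_of_hasEigenvalue {T : End F E} {n : ℕ} (hT : T ^ n = 1) {ζ : F}
    (hζ : T.HasEigenvalue ζ) : ζ ^ n = 1 := by
  obtain ⟨x, hx⟩ := hζ.exists_hasEigenvector
  have hpow : (ζ ^ n) • x = (1 : F) • x := by
    rw [← hx.pow_apply, hT, End.one_apply, one_smul]
  exact smul_left_injective F hx.2 hpow

variable {S : Type*} [Group S]

theorem pow_finrank_eigenspace_eq_one (ρ : Representation F S E) {z : S} (hz : z ∈ commutator S)
    (hzc : z ∈ Subgroup.center S) (ζ : F) :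
    ζ ^ finrank F (End.eigenspace (ρ z) ζ) = 1 := by
  let W : Subrepresentation ρ :=
    { toSubmodule := End.eigenspace (ρ z) ζ
      apply_mem_toSubmodule g := End.mapsTo_genEigenspace_of_comm
        (Commute.map (Subgroup.mem_center_iff.mp hzc g).symm ρ) ζ 1 }
  let χ : S →* F := LinearMap.det.comp W.toRepresentation
  have hscalar : W.toRepresentation z = ζ • LinearMap.id :=
    LinearMap.ext fun x ↦ Subtype.ext (End.mem_eigenspace_iff.mp x.2)
  calc ζ ^ finrank F (End.eigenspace (ρ z) ζ) = LinearMap.det (W.toRepresentation z) := by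
        rw [hscalar, LinearMap.det_smul, LinearMap.det_id, mul_one]
    _ = χ.toHomUnits z := rfl
    _ = 1 := Units.val_eq_one.mpr (Abelianization.commutator_subset_ker χ.toHomUnits hz)

variable [Finite S] {q : ℕ} [hqp : Fact q.Prime]

/- A nontrivial central commutator acts on an eigenspace by a scalar `ζ ≠ 1` of `q`-power order and
of determinant `1`, which is impossible in dimension less than `q`. -/
theorem isMulCommutative_of_finrank_lt [IsAlgClosed F] [FiniteDimensional F E]
    (hS : IsPGroup q S) (ρ : Representation F S E) (hρ : Function.Injective ρ) (hq : (q : F) ≠ 0)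
    (hE : finrank F E < q) : IsMulCommutative S := by
  by_contra hcomm
  have := hS.isNilpotent
  obtain ⟨z, hz, hzc, hz1⟩ := exists_mem_commutator_mem_center_ne_one hcomm
  obtain ⟨k, hk⟩ := hS z
  have hpow : ρ z ^ q ^ k = 1 := by rw [← map_pow, hk, map_one]
  obtain ⟨ζ, hζ, hζ1⟩ := exists_hasEigenvalue_ne_one hpow
    (by rw [Nat.cast_pow]; exact pow_ne_zero k hq) ((map_ne_one_iff ρ hρ).mpr hz1)
  let d := finrank F (End.eigenspace (ρ z) ζ)
  have hd : 0 < d := finrank_pos_iff.mpr (Submodule.nontrivial_iff_ne_bot.mpr hζ)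
  have hdq : d < q := (Submodule.finrank_le _).trans_lt hE
  have hcop : (q ^ k).Coprime d := (Nat.coprime_of_lt_prime hd.ne' hdq hqp.out).pow_left k
  exact hζ1 <| (pow_eq_one_iff_of_coprime hcop).mp
    ⟨pow_eq_one_of_hasEigenvalue hpow hζ, pow_finrank_eigenspace_eq_one ρ hz hzc ζ⟩

end LinearGroup

section LinearSection

variable {F n H S : Type*} [Field F] [Fintype n] [DecidableEq n] [Group H] [Group S]
  {q : ℕ} [Fact q.Prime]

theorem isMulCommutative_of_injective_generalLinearGroup [Finite S] (hS : IsPGroup q S)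
    {σ : S →* GL n F} (hσ : Function.Injective σ) (hq : (q : F) ≠ 0) (hn : Fintype.card n < q) :
    IsMulCommutative S := by
  let K := AlgebraicClosure F
  let ρ : Representation K S (n → K) :=
    (toLinAlgEquiv'.toRingEquiv.toRingHom.comp (algebraMap F K).mapMatrix).toMonoidHom.comp
      ((Units.coeHom _).comp σ)
  have hρ : Function.Injective ρ := toLinAlgEquiv'.injective.comp <|
    (map_injective (algebraMap F K).injective).comp <| Units.val_injective.comp hσ
  refine isMulCommutative_of_finrank_lt hS ρ hρ ?_ (by rwa [finrank_fintype_fun_eq_card])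
  rw [← map_natCast (algebraMap F K)]
  exact (map_ne_zero _).mpr hq

theorem isMulCommutative_of_isPGroup_quotient {L : Subgroup (GL n F)} [Finite L] {φ : L →* H}
    (hφ : Function.Surjective φ) (hS : IsPGroup q S) {τ : S →* H} (hτ : Function.Injective τ)
    (hq : (q : F) ≠ 0) (hn : Fintype.card n < q) : IsMulCommutative S := by
  obtain ⟨Q, hQ⟩ := (hS.of_surjective τ.rangeRestrict τ.rangeRestrict_surjective).exists_le_sylow
  obtain ⟨P, rfl⟩ := Sylow.mapSurjective_surjective hφ q Q
  have : IsMulCommutative P := isMulCommutative_of_injective_generalLinearGroup P.isPGroup'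
    (σ := L.subtype.comp (P : Subgroup L).subtype)
    (L.subtype_injective.comp (P : Subgroup L).subtype_injective) hq hn
  refine isMulCommutative_iff.mpr fun x y ↦ hτ ?_
  rw [map_mul, map_mul]
  exact setLike_mul_comm (s := (P : Subgroup L).map φ) (hQ ⟨x, rfl⟩) (hQ ⟨y, rfl⟩)

end LinearSection

section SimpleQuotientOfSymplecticGroup

variable {ι H : Type*} [Fintype ι] [DecidableEq ι] [Nontrivial ι] [Group H] [Finite H]
  [IsSimpleGroup H] {K : Subgroup (symplecticGroup ι ℤ)} [K.FiniteIndex] {f : K →* H}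

theorem exists_eq_of_isPGroup_of_not_isMulCommutative (hf : Function.Surjective f) :
    ∃ p : ℕ, ∀ (q : ℕ) [Fact q.Prime], 2 * Fintype.card ι < q →
      ∀ {S : Type*} [Group S] (τ : S →* H), Function.Injective τ → IsPGroup q S →
        ¬IsMulCommutative S → q = p := by
  by_cases hH : IsMulCommutative H
  · refine ⟨0, fun q _ _ S _ τ hτ _ hS ↦ absurd (isMulCommutative_iff.mpr fun x y ↦ hτ ?_) hS⟩
    rw [map_mul, map_mul, mul_comm']
  obtain ⟨p, hp, L, φ, hφ⟩ := exists_prime_surjective_of_subgroup_generalLinearGroup hH hf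
  refine ⟨p, fun q hq hιq S _ τ hτ hpS hS ↦ by_contra fun hqp ↦ hS ?_⟩
  have : Fact p.Prime := ⟨hp⟩
  refine isMulCommutative_of_isPGroup_quotient hφ hpS hτ ?_ (by simpa [two_mul] using hιq)
  rwa [Ne, ZMod.natCast_eq_zero_iff, Nat.prime_dvd_prime_iff_eq hp hq.out, eq_comm]

end SimpleQuotientOfSymplecticGroup

section AlternatingGroup

theorem sign_eq_one_of_odd_card {G α : Type*} [Group G] [Fintype α] [DecidableEq α]
    (hG : Odd (Nat.card G)) (τ : G →* Equiv.Perm α) (x : G) : Equiv.Perm.sign (τ x) = 1 := by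
  have hpow : Equiv.Perm.sign (τ x) ^ Nat.card G = 1 := by
    rw [← map_pow, ← map_pow, pow_card_eq_one', map_one, map_one]
  exact (Int.units_eq_one_or _).resolve_right fun h ↦ by simp [h, hG.neg_one_pow] at hpow

/-- The regular representation of a finite group of odd order, as a map into the alternating group
on its underlying set. -/
def regularAlternating (G : Type*) [Group G] [Fintype G] [DecidableEq G] (hG : Odd (Nat.card G)) :
    G →* alternatingGroup G :=
  (MulAction.toPermHom G G).codRestrict _ (sign_eq_one_of_odd_card hG _)

theorem regularAlternating_injective (G : Type*) [Group G] [Fintype G] [DecidableEq G]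
    (hG : Odd (Nat.card G)) : Function.Injective (regularAlternating G hG) :=
  .of_comp (f := Subtype.val) (MulAction.toPerm_injective (α := G))

end AlternatingGroup

section WreathProduct

/-- The wreath product of two cyclic groups of order `q`: for `q` prime, a nonabelian `q`-group. -/
abbrev CyclicWreath (q : ℕ) : Type :=
  Multiplicative (ZMod q) ≀ᵣ Multiplicative (ZMod q)

variable (q : ℕ) [Fact q.Prime]

theorem card_cyclicWreath : Nat.card (CyclicWreath q) = q ^ (q + 1) := by
  simp [RegularWreathProduct.card, pow_succ]

theorem isPGroup_cyclicWreath : IsPGroup q (CyclicWreath q) :=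
  .of_card (card_cyclicWreath q)

theorem not_isMulCommutative_cyclicWreath : ¬IsMulCommutative (CyclicWreath q) := by
  intro h
  let t : Multiplicative (ZMod q) := .ofAdd 1
  let a : CyclicWreath q := ⟨1, t⟩
  let b : CyclicWreath q := ⟨Pi.mulSingle 1 t, 1⟩
  have ht : t ≠ 1 := by simp [t]
  have hab := congrFun (congrArg RegularWreathProduct.left (mul_comm' a b)) t
  simp [RegularWreathProduct.mul_def, a, b, ht] at hab

end WreathProduct

theorem exists_isSimpleGroup_injective_cyclicWreath {q r : ℕ} [hq : Fact q.Prime]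
    [hr : Fact r.Prime] (hq5 : 5 ≤ q) (hr2 : r ≠ 2) :
    ∃ H : BundledFiniteGroup, IsSimpleGroup H.carrier ∧
      (∃ τ : CyclicWreath q →* H.carrier, Function.Injective τ) ∧
        ∃ τ : CyclicWreath r →* H.carrier, Function.Injective τ := by
  classical
  let G := CyclicWreath q × CyclicWreath r
  have : Fintype G := Fintype.ofFinite G
  have hG : Nat.card G = q ^ (q + 1) * r ^ (r + 1) := by
    rw [Nat.card_prod, card_cyclicWreath, card_cyclicWreath]
  have hodd : Odd (Nat.card G) := by
    rw [hG]
    exact (hq.out.odd_of_ne_two (by lia)).pow.mul (hr.out.odd_of_ne_two hr2).pow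
  have hqG : q ∣ Nat.card G := hG ▸ Dvd.dvd.mul_right (dvd_pow_self q q.succ_ne_zero) _
  have hτ := regularAlternating_injective G hodd
  exact ⟨⟨alternatingGroup G⟩,
    alternatingGroup.isSimpleGroup (hq5.trans (Nat.le_of_dvd hodd.pos hqG)),
    ⟨(regularAlternating G hodd).comp (.inl _ _), hτ.comp (Prod.mk_left_injective 1)⟩,
    ⟨(regularAlternating G hodd).comp (.inr _ _), hτ.comp (Prod.mk_right_injective 1)⟩⟩

end SymplecticInvolvement

open SymplecticInvolvement

/-- For every `g ≥ 2`, not every finite group is involved in the integral symplectic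
group `Sp(2g, ℤ)` (the group of `2g × 2g` integer matrices preserving the standard
symplectic form): there is a finite group `H` such that no finite-index subgroup of
`Sp(2g, ℤ)` admits a surjective homomorphism onto `H`. -/
theorem not_all_finite_groups_involved_in_Sp (g : ℕ) (hg : 2 ≤ g) :
    ∃ H : BundledFiniteGroup,
      ∀ K : Subgroup ↥(Matrix.symplecticGroup (Fin g) ℤ), K.FiniteIndex →
        ∀ f : K →* H.carrier, ¬ Function.Surjective f := by
  obtain ⟨q, hgq, hq⟩ := Nat.exists_infinite_primes (2 * g + 1)
  obtain ⟨r, hqr, hr⟩ := Nat.exists_infinite_primes (q + 1)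
  have : Fact q.Prime := ⟨hq⟩
  have : Fact r.Prime := ⟨hr⟩
  have : Nontrivial (Fin g) := Fin.nontrivial_iff_two_le.mpr hg
  obtain ⟨H, hH, ⟨τ, hτ⟩, ⟨υ, hυ⟩⟩ :=
    exists_isSimpleGroup_injective_cyclicWreath (q := q) (r := r) (by lia) (by lia)
  refine ⟨H, fun K hK f hf ↦ ?_⟩
  obtain ⟨p, hp⟩ := exists_eq_of_isPGroup_of_not_isMulCommutative hf
  have hqp : q = p := hp q (by rwa [Fintype.card_fin]) τ hτ (isPGroup_cyclicWreath q)
    (not_isMulCommutative_cyclicWreath q)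
  have hrp : r = p := hp r (by rw [Fintype.card_fin]; lia) υ hυ (isPGroup_cyclicWreath r)
    (not_isMulCommutative_cyclicWreath r)
  lia
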